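/- arXiv:1507.02122 — 3 statements merged into one kernel-verified Lean document; each statement's English description precedes it below -/
import Mathlib

section
/- Every critical point of the reliability polynomial R_Mc on ℝ^5 is a saddle point: if all five partial derivatives of R_Mc vanish at a point p ∈ ℝ^5, then p is neither a local maximum nor a local minimum of R_Mc. -/
noncomputable def RMc (x1 x2 x3 x4 x5 : ℝ) : ℝ :=
  x1*x4 + x2*x5 + x2*x3*x4 - x1*x2*x3*x4 - x1*x2*x4*x5 - x2*x3*x4*x5 + x1*x2*x3*x4*x5

/-!
A function affine in each variable satisfies a strong maximum principle: if it has a local extremum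
at `p`, it is constant. Releasing the coordinates from `p` one at a time, reflection in the new
coordinate averages two nearby values to one already known to be extremal, so both are extremal and
the function is constant near `p`. An affine map that is constant near a point is constant, and
applying this one coordinate at a time spreads the constancy to the whole space.
-/

open Filter Function Topology

section Multiaffine

/-- A function of a family of variables is multiaffine over `𝕜` if it is affine in each variable
when the others are held fixed; reliability polynomials are the motivating example. The affine maps
are not bundled, since they are determined by the function. -/
def IsMultiaffine (𝕜 : Type*) {ι F : Type*} {E : ι → Type*} [DecidableEq ι] [Ring 𝕜]
    [∀ i, AddCommGroup (E i)] [∀ i, Module 𝕜 (E i)] [AddCommGroup F] [Module 𝕜 F]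
    (f : (∀ i, E i) → F) : Prop :=
  ∀ x i, ∃ g : E i →ᵃ[𝕜] F, ∀ t, f (update x i t) = g t

variable {𝕜 ι F : Type*} [DecidableEq ι] [AddCommGroup F]

theorem isMultiaffine_of_update_eq_lineMap [Ring 𝕜] [Module 𝕜 F] {f : (ι → 𝕜) → F}
    (hf : ∀ x i t, f (update x i t) = AffineMap.lineMap (f (update x i 0)) (f (update x i 1)) t) :
    IsMultiaffine 𝕜 f :=
  fun x i => ⟨AffineMap.lineMap (f (update x i 0)) (f (update x i 1)), hf x i⟩

variable {E : ι → Type*} [∀ i, AddCommGroup (E i)]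

theorem affineMap_apply_pointReflection_add {V : Type*} [Ring 𝕜] [AddCommGroup V] [Module 𝕜 V]
    [Module 𝕜 F] (g : V →ᵃ[𝕜] F) (a t : V) :
    g (Equiv.pointReflection a t) + g t = g a + g a := by
  have hrefl : g (Equiv.pointReflection a t) = g a - g t + g a := by
    rw [Equiv.pointReflection_apply, g.map_vadd, g.linearMap_vsub, vsub_eq_sub, vadd_eq_add]
  rw [hrefl]
  abel

theorem affineMap_eq_of_eventually_eq {V : Type*} [NontriviallyNormedField 𝕜] [AddCommGroup V]
    [Module 𝕜 V] [TopologicalSpace V] [IsTopologicalAddGroup V] [ContinuousSMul 𝕜 V]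
    [Module 𝕜 F] {g : V →ᵃ[𝕜] F} {a : V} {c : F} (hg : ∀ᶠ t in 𝓝 a, g t = c) (v : V) :
    g v = c := by
  have hline : Tendsto (AffineMap.lineMap a v : 𝕜 → V) (𝓝 0) (𝓝 a) :=
    AffineMap.lineMap_continuous.tendsto' _ _ (AffineMap.lineMap_apply_zero a v)
  obtain ⟨r, hr, hr0⟩ :=
    (((hline.eventually hg).filter_mono nhdsWithin_le_nhds).and
      (self_mem_nhdsWithin : {0}ᶜ ∈ 𝓝[≠] (0 : 𝕜))).exists
  rw [AffineMap.apply_lineMap, hg.self_of_nhds, AffineMap.lineMap_eq_left_iff] at hr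
  exact (hr.resolve_right hr0).symm

namespace IsMultiaffine

theorem neg [Ring 𝕜] [∀ i, Module 𝕜 (E i)] [Module 𝕜 F] {f : (∀ i, E i) → F}
    (hf : IsMultiaffine 𝕜 f) : IsMultiaffine 𝕜 (-f) := fun x i => by
  obtain ⟨g, hg⟩ := hf x i
  exact ⟨-g, fun t => congrArg Neg.neg (hg t)⟩

theorem update_pointReflection_add [Ring 𝕜] [∀ i, Module 𝕜 (E i)] [Module 𝕜 F]
    {f : (∀ i, E i) → F} (hf : IsMultiaffine 𝕜 f) (x : ∀ i, E i) (i : ι) (a : E i) :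
    f (update x i (Equiv.pointReflection a (x i))) + f x =
      f (update x i a) + f (update x i a) := by
  obtain ⟨g, hg⟩ := hf x i
  have hx : f x = g (x i) := by rw [← hg, update_eq_self]
  rw [hx, hg, hg, affineMap_apply_pointReflection_add]

variable [∀ i, TopologicalSpace (E i)] [∀ i, IsTopologicalAddGroup (E i)]

theorem eventually_eq_of_isLocalMax [Finite ι] [Ring 𝕜] [∀ i, Module 𝕜 (E i)] [Module 𝕜 F]
    [PartialOrder F] [IsOrderedAddMonoid F] {f : (∀ i, E i) → F} {p : ∀ i, E i}
    (hf : IsMultiaffine 𝕜 f) (hp : IsLocalMax f p) : ∀ᶠ x in 𝓝 p, f x = f p := by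
  cases nonempty_fintype ι
  suffices h : ∀ s : Finset ι, ∀ᶠ x in 𝓝 p, (∀ j ∉ s, x j = p j) → f x = f p by
    filter_upwards [h Finset.univ] with x hx using hx fun j hj => absurd (Finset.mem_univ j) hj
  intro s
  induction s using Finset.induction_on with
  | empty => exact .of_forall fun x hx => congrArg f (funext fun j => hx j (Finset.notMem_empty j))
  | insert i s _ ih =>
    have hcenter : Tendsto (fun x => update x i (p i)) (𝓝 p) (𝓝 p) :=
      (continuous_id.update i continuous_const).tendsto' _ _ (update_eq_self i p)
    have hreflect :
        Tendsto (fun x => update x i (Equiv.pointReflection (p i) (x i))) (𝓝 p) (𝓝 p) := by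
      refine (continuous_id.update i ?_).tendsto' _ _ ?_
      · exact (Homeomorph.pointReflection (p i)).continuous.comp (continuous_apply i)
      · simp
    filter_upwards [hp, hreflect.eventually hp, hcenter.eventually ih] with x hx hx' hmid hxp
    have hmid : f (update x i (p i)) = f p := hmid fun j hj => by
      obtain rfl | hji := eq_or_ne j i
      · exact update_self ..
      · rw [update_of_ne hji, hxp j (by simp [hji, hj])]
    have hsum := hf.update_pointReflection_add x i (p i)
    rw [hmid] at hsum
    exact ((add_eq_add_iff_eq_and_eq hx' hx).1 hsum).2

theorem eq_of_eventually_eq [Finite ι] [NontriviallyNormedField 𝕜] [∀ i, Module 𝕜 (E i)]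
    [∀ i, ContinuousSMul 𝕜 (E i)] [Module 𝕜 F] {f : (∀ i, E i) → F} {p : ∀ i, E i} {c : F}
    (hf : IsMultiaffine 𝕜 f) (hp : ∀ᶠ x in 𝓝 p, f x = c) (x : ∀ i, E i) : f x = c := by
  cases nonempty_fintype ι
  suffices h : ∀ s : Finset ι, ∀ᶠ y in 𝓝 p, ∀ x, (∀ j ∉ s, x j = y j) → f x = c from
    (h Finset.univ).self_of_nhds x fun j hj => absurd (Finset.mem_univ j) hj
  intro s
  induction s using Finset.induction_on with
  | empty =>
    filter_upwards [hp] with y hy x hxy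
    rwa [funext fun j => hxy j (Finset.notMem_empty j)]
  | insert i s _ ih =>
    filter_upwards [eventually_eventually_nhds.2 ih] with y hy x hxy
    obtain ⟨g, hg⟩ := hf x i
    have hupdate : Tendsto (update y i) (𝓝 (y i)) (𝓝 y) :=
      (continuous_const.update i continuous_id).tendsto' _ _ (update_eq_self i y)
    have hlocal : ∀ᶠ t in 𝓝 (y i), g t = c := by
      filter_upwards [hupdate.eventually hy] with t ht
      rw [← hg]
      refine ht _ fun j hj => ?_
      obtain rfl | hji := eq_or_ne j i
      · rw [update_self, update_self]
      · rw [update_of_ne hji, update_of_ne hji, hxy j (by simp [hji, hj])]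
    rw [← update_eq_self i x, hg]
    exact affineMap_eq_of_eventually_eq hlocal (x i)

theorem eq_of_isLocalExtr [Finite ι] [NontriviallyNormedField 𝕜] [∀ i, Module 𝕜 (E i)]
    [∀ i, ContinuousSMul 𝕜 (E i)] [Module 𝕜 F] [PartialOrder F] [IsOrderedAddMonoid F]
    {f : (∀ i, E i) → F} {p : ∀ i, E i} (hf : IsMultiaffine 𝕜 f) (hp : IsLocalExtr f p)
    (x : ∀ i, E i) : f x = f p := by
  obtain hmin | hmax := hp
  · exact neg_injective (hf.neg.eq_of_eventually_eq (hf.neg.eventually_eq_of_isLocalMax hmin.neg) x)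
  · exact hf.eq_of_eventually_eq (hf.eventually_eq_of_isLocalMax hmax) x

end IsMultiaffine

end Multiaffine

theorem isMultiaffine_RMc :
    IsMultiaffine ℝ (fun x : Fin 5 → ℝ => RMc (x 0) (x 1) (x 2) (x 3) (x 4)) :=
  isMultiaffine_of_update_eq_lineMap fun x i t => by
    fin_cases i <;> simp [RMc, AffineMap.lineMap_apply] <;> ring

theorem rmc_critical_points_are_saddle_general (p : Fin 5 → ℝ) :
    ¬ IsLocalMax (fun x : Fin 5 → ℝ => RMc (x 0) (x 1) (x 2) (x 3) (x 4)) p ∧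
    ¬ IsLocalMin (fun x : Fin 5 → ℝ => RMc (x 0) (x 1) (x 2) (x 3) (x 4)) p := by
  suffices h : ¬ IsLocalExtr (fun x : Fin 5 → ℝ => RMc (x 0) (x 1) (x 2) (x 3) (x 4)) p from
    ⟨fun hmax => h (.inr hmax), fun hmin => h (.inl hmin)⟩
  intro hp
  have hconst := isMultiaffine_RMc.eq_of_isLocalExtr hp
  have hvalues : RMc 0 0 0 0 0 = RMc 1 1 1 1 1 := (hconst 0).trans (hconst 1).symm
  norm_num [RMc] at hvalues

theorem rmc_critical_points_are_saddle (p : Fin 5 → ℝ)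
    (hcrit : ∀ i : Fin 5,
      deriv (fun s => RMc ((Function.update p i s) 0) ((Function.update p i s) 1)
        ((Function.update p i s) 2) ((Function.update p i s) 3)
        ((Function.update p i s) 4)) (p i) = 0) :
    ¬ IsLocalMax (fun x : Fin 5 → ℝ => RMc (x 0) (x 1) (x 2) (x 3) (x 4)) p ∧
    ¬ IsLocalMin (fun x : Fin 5 → ℝ => RMc (x 0) (x 1) (x 2) (x 3) (x 4)) p :=
  rmc_critical_points_are_saddle_general p
end

section
/- The diagonal reliability function f(x) = 2x² + x³ − 3x⁴ + x⁵ satisfies f(0) = 0, f(1) = 1, and f is strictly monotonically increasing on the interval [0,1]. -/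
/-!
Condition the bridge on the state of its link, component 3. If the link is broken, the series pairs
`{1, 4}` and `{2, 5}` stand in parallel; if it works, then conditioning on component 2 leaves either
components 4 and 5 in parallel or the series pair `{1, 4}`. On the diagonal each conditioning is a
convex combination with weight `x`, and such a combination increases with `x` as soon as both
branches do and the branch in which the component works is the more reliable one.
-/

open AffineMap (lineMap lineMap_apply_ring lineMap_mono)
open Set

section Conditioning

variable {α k E : Type*} [Preorder α] [Ring k] [LinearOrder k] [IsOrderedRing k]
  [AddCommGroup E] [PartialOrder E] [IsOrderedAddMonoid E] [Module k E] [IsStrictOrderedModule k E]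

theorem strictMonoOn_lineMap {s : Set α} {a b : α → E} {p : α → k} (ha : MonotoneOn a s)
    (hb : StrictMonoOn b s) (hab : ∀ x ∈ s, a x ≤ b x) (hp : StrictMonoOn p s)
    (hp_unit : MapsTo p s (Icc 0 1)) : StrictMonoOn (fun x ↦ lineMap (a x) (b x) (p x)) s := by
  intro x hx y hy hxy
  have hpxy : p x < p y := hp hx hy hxy
  have hpy : 0 < p y := (hp_unit hx).1.trans_lt hpxy
  calc lineMap (a x) (b x) (p x)
      ≤ lineMap (a x) (b x) (p y) := lineMap_mono (hab x hx) hpxy.le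
    _ ≤ lineMap (a y) (b x) (p y) := lineMap_mono_left (ha hx hy hxy.le) (hp_unit hy).2
    _ < lineMap (a y) (b y) (p y) := lineMap_strict_mono_right (hb hx hy hxy) hpy

end Conditioning

section Bridge

variable {R : Type*} [CommRing R]

/-- The reliability of two parallel independent components, each working with probability `x`. -/
def parallelReliability (x : R) : R := 1 - (1 - x) ^ 2

/-- The diagonal reliability of the bridge given that its link works, conditioned on component 2. -/
def linkedReliability (x : R) : R := lineMap (x ^ 2) (parallelReliability x) x

theorem lineMap_parallelReliability_linkedReliability (x : R) :
    lineMap (parallelReliability (x ^ 2)) (linkedReliability x) x =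
      2 * x ^ 2 + x ^ 3 - 3 * x ^ 4 + x ^ 5 := by
  simp only [linkedReliability, parallelReliability, lineMap_apply_ring]
  ring

variable [LinearOrder R] [IsStrictOrderedRing R]

theorem strictMonoOn_pow_Icc {n : ℕ} (hn : n ≠ 0) : StrictMonoOn (fun x : R ↦ x ^ n) (Icc 0 1) :=
  (pow_left_strictMonoOn₀ hn).mono fun _ hx ↦ hx.1

theorem mapsTo_pow_Icc (n : ℕ) : MapsTo (fun x : R ↦ x ^ n) (Icc 0 1) (Icc 0 1) :=
  fun _ hx ↦ ⟨pow_nonneg hx.1 n, pow_le_one₀ hx.1 hx.2⟩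

theorem strictMonoOn_parallelReliability :
    StrictMonoOn (parallelReliability : R → R) (Icc 0 1) := by
  intro x _ y hy hxy
  have hy' : 0 ≤ 1 - y := sub_nonneg.2 hy.2
  unfold parallelReliability
  gcongr

theorem sq_le_parallelReliability {x : R} (hx : x ∈ Icc 0 1) : x ^ 2 ≤ parallelReliability x := by
  have h : 0 ≤ 2 * (x * (1 - x)) :=
    mul_nonneg zero_le_two (mul_nonneg hx.1 (sub_nonneg.2 hx.2))
  unfold parallelReliability
  linear_combination h

theorem strictMonoOn_linkedReliability : StrictMonoOn (linkedReliability : R → R) (Icc 0 1) :=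
  strictMonoOn_lineMap (strictMonoOn_pow_Icc two_ne_zero).monotoneOn
    strictMonoOn_parallelReliability (fun _ ↦ sq_le_parallelReliability)
    strictMonoOn_id (mapsTo_id _)

theorem parallelReliability_sq_le_linkedReliability {x : R} (hx : x ∈ Icc 0 1) :
    parallelReliability (x ^ 2) ≤ linkedReliability x := by
  have h : 0 ≤ (x * (1 - x)) ^ 2 := pow_nonneg (mul_nonneg hx.1 (sub_nonneg.2 hx.2)) 2
  simp only [linkedReliability, parallelReliability, lineMap_apply_ring]
  linear_combination h

theorem diagonal_sigmoid_general :
    (fun x : R ↦ 2 * x ^ 2 + x ^ 3 - 3 * x ^ 4 + x ^ 5) 0 = 0 ∧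
    (fun x : R ↦ 2 * x ^ 2 + x ^ 3 - 3 * x ^ 4 + x ^ 5) 1 = 1 ∧
    StrictMonoOn (fun x : R ↦ 2 * x ^ 2 + x ^ 3 - 3 * x ^ 4 + x ^ 5) (Icc 0 1) := by
  refine ⟨by ring, by ring, ?_⟩
  have h_broken : StrictMonoOn (fun x : R ↦ parallelReliability (x ^ 2)) (Icc 0 1) :=
    strictMonoOn_parallelReliability.comp (strictMonoOn_pow_Icc two_ne_zero) (mapsTo_pow_Icc 2)
  have h_bridge := strictMonoOn_lineMap h_broken.monotoneOn strictMonoOn_linkedReliability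
    (fun _ ↦ parallelReliability_sq_le_linkedReliability) strictMonoOn_id (mapsTo_id _)
  simpa only [id, lineMap_parallelReliability_linkedReliability] using h_bridge

end Bridge

theorem diagonal_sigmoid :
    (fun x : ℝ => 2*x^2 + x^3 - 3*x^4 + x^5) 0 = 0 ∧
    (fun x : ℝ => 2*x^2 + x^3 - 3*x^4 + x^5) 1 = 1 ∧
    StrictMonoOn (fun x : ℝ => 2*x^2 + x^3 - 3*x^4 + x^5) (Set.Icc 0 1) :=
  diagonal_sigmoid_general
end

section
/- Suppose a1,...,a6, b1,...,b6 are real numbers such that R_Mc(a1 t + b1, a2 t + b2, a3 t + b3, a4 t + b4, a5 t + b5) = a6 t + b6 holds for every real t (i.e., the affine line t ↦ (a1 t + b1, ..., a5 t + b5, a6 t + b6) is contained in the graph of R_Mc). Then b6 = R_Mc(b1, b2, b3, b4, b5) and a1 a2 a3 a4 a5 = 0. -/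
/-! Restricting a polynomial of total degree at most `n` to a line with direction `a` gives a
univariate polynomial whose `n`-th coefficient is the value at `a` of the homogeneous part of
degree `n`. If the line lies on the graph, the restriction is affine, so for `n ≥ 2` that value
vanishes; the top homogeneous part of the bridge polynomial is the product of all its variables. -/

section LineRestriction

open Polynomial

theorem coeff_prod_sum_of_natDegree_le {ι R : Type*} [CommSemiring R] (s : Finset ι)
    (f : ι → R[X]) (n : ι → ℕ) (h : ∀ i ∈ s, (f i).natDegree ≤ n i) :
    (∏ i ∈ s, f i).coeff (∑ i ∈ s, n i) = ∏ i ∈ s, (f i).coeff (n i) := by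
  induction s using Finset.cons_induction with
  | empty => simp
  | cons i s hi ih =>
    have hs : ∀ j ∈ s, (f j).natDegree ≤ n j := fun j hj => h j (Finset.mem_cons_of_mem hj)
    have hprod : (∏ j ∈ s, f j).natDegree ≤ ∑ j ∈ s, n j :=
      (natDegree_prod_le s f).trans (Finset.sum_le_sum hs)
    rw [Finset.prod_cons, Finset.sum_cons, Finset.prod_cons,
      coeff_mul_add_eq_of_natDegree_le (h i (Finset.mem_cons_self i s)) hprod, ih hs]

section CommSemiring

variable {σ R : Type*} [CommSemiring R] (a b : σ → R)

/-- Restriction of polynomial functions to the parametrized line `t ↦ a t + b`, as the algebra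
homomorphism substituting `a i * X + b i` for the `i`-th variable. The direction `a` may be zero. -/
noncomputable def lineRestriction : MvPolynomial σ R →ₐ[R] R[X] :=
  MvPolynomial.aeval fun i => C (a i) * X + C (b i)

theorem lineRestriction_X (i : σ) :
    lineRestriction a b (MvPolynomial.X i) = C (a i) * X + C (b i) :=
  MvPolynomial.aeval_X _ i

theorem eval_lineRestriction (p : MvPolynomial σ R) (t : R) :
    (lineRestriction a b p).eval t = MvPolynomial.eval (fun i => a i * t + b i) p := by
  induction p using MvPolynomial.induction_on with
  | C r => simp [← MvPolynomial.algebraMap_eq]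
  | add p q hp hq => simp [hp, hq]
  | mul_X p i hp => simp [hp, lineRestriction_X]

theorem natDegree_lineRestriction_le (p : MvPolynomial σ R) :
    (lineRestriction a b p).natDegree ≤ p.totalDegree := by
  simpa [lineRestriction] using
    MvPolynomial.aeval_natDegree_le p le_rfl _ fun _ => natDegree_linear_le

theorem coeff_degree_lineRestriction_monomial (d : σ →₀ ℕ) (r : R) :
    (lineRestriction a b (MvPolynomial.monomial d r)).coeff d.degree =
      MvPolynomial.eval a (MvPolynomial.monomial d r) := by
  have hpow (i : σ) : ((C (a i) * X + C (b i)) ^ d i).natDegree ≤ d i := by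
    simpa using natDegree_pow_le_of_le (d i) natDegree_linear_le
  have hcoeff (i : σ) : ((C (a i) * X + C (b i)) ^ d i).coeff (d i) = a i ^ d i := by
    simpa using coeff_pow_of_natDegree_le (m := d i) (natDegree_linear_le (a := a i) (b := b i))
  rw [lineRestriction, MvPolynomial.aeval_monomial, algebraMap_eq, coeff_C_mul, Finsupp.prod,
    Finsupp.degree_apply, coeff_prod_sum_of_natDegree_le _ _ _ fun i _ => hpow i,
    MvPolynomial.eval_monomial, Finsupp.prod]
  simp only [hcoeff]

theorem coeff_lineRestriction {p : MvPolynomial σ R} {n : ℕ} (hp : p.totalDegree ≤ n) :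
    (lineRestriction a b p).coeff n =
      MvPolynomial.eval a (MvPolynomial.homogeneousComponent n p) := by
  conv_lhs => rw [p.as_sum]
  rw [MvPolynomial.homogeneousComponent_apply, Finset.sum_filter, map_sum, map_sum,
    finsetSum_coeff]
  refine Finset.sum_congr rfl fun d hd => ?_
  split_ifs with hdn
  · rw [← hdn, coeff_degree_lineRestriction_monomial]
  · have hlt : d.degree < n :=
      lt_of_le_of_ne ((MvPolynomial.le_totalDegree hd).trans hp) hdn
    rw [map_zero]
    exact coeff_eq_zero_of_natDegree_lt <| (natDegree_lineRestriction_le a b _).trans_lt <|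
      (MvPolynomial.totalDegree_monomial_le _ _).trans_lt hlt

end CommSemiring

theorem eval_homogeneousComponent_eq_zero_of_line_in_graph {σ R : Type*} [CommRing R]
    [IsDomain R] [Infinite R] {p : MvPolynomial σ R} {n : ℕ} (hn : 1 < n)
    (hp : p.totalDegree ≤ n) {a b : σ → R} {c d : R}
    (hline : ∀ t, MvPolynomial.eval (fun i => a i * t + b i) p = c * t + d) :
    MvPolynomial.eval a (MvPolynomial.homogeneousComponent n p) = 0 := by
  have haffine : lineRestriction a b p = C c * X + C d :=
    Polynomial.funext fun t => by simpa [eval_lineRestriction] using hline t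
  rw [← coeff_lineRestriction a b hp, haffine]
  exact coeff_eq_zero_of_natDegree_lt (natDegree_linear_le.trans_lt hn)

end LineRestriction

section Bridge

open MvPolynomial

variable (R : Type*) [CommRing R]

/-- The reliability polynomial of the bridge network as a formal polynomial, with the paper's
variables `x₁, …, x₅` indexed by `0, …, 4` and coefficients in an arbitrary commutative ring. -/
noncomputable def bridgePolynomial : MvPolynomial (Fin 5) R :=
  X 0 * X 3 + X 1 * X 4 + X 1 * X 2 * X 3 - X 0 * X 1 * X 2 * X 3 - X 0 * X 1 * X 3 * X 4
    - X 1 * X 2 * X 3 * X 4 + X 0 * X 1 * X 2 * X 3 * X 4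

theorem isHomogeneous_prod_X {σ R : Type*} [CommSemiring R] (s : Finset σ) :
    (∏ i ∈ s, X i : MvPolynomial σ R).IsHomogeneous s.card := by
  simpa using IsHomogeneous.prod s X (fun _ => 1) fun i _ => isHomogeneous_X R i

theorem totalDegree_bridgePolynomial_sub_prod_X_le :
    (bridgePolynomial R - ∏ i, X i).totalDegree ≤ 4 := by
  have hX (i : Fin 5) : (X i : MvPolynomial (Fin 5) R).IsHomogeneous 1 := isHomogeneous_X R i
  have hquadratic (i j : Fin 5) : X i * X j ∈ restrictTotalDegree (Fin 5) R 4 :=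
    (mem_restrictTotalDegree ..).2 <| ((hX i).mul (hX j)).totalDegree_le.trans (by norm_num)
  have hcubic (i j k : Fin 5) : X i * X j * X k ∈ restrictTotalDegree (Fin 5) R 4 :=
    (mem_restrictTotalDegree ..).2 <|
      (((hX i).mul (hX j)).mul (hX k)).totalDegree_le.trans (by norm_num)
  have hquartic (i j k l : Fin 5) : X i * X j * X k * X l ∈ restrictTotalDegree (Fin 5) R 4 :=
    (mem_restrictTotalDegree ..).2 ((((hX i).mul (hX j)).mul (hX k)).mul (hX l)).totalDegree_le
  rw [bridgePolynomial, Fin.prod_univ_five, add_sub_cancel_right, ← mem_restrictTotalDegree]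
  exact sub_mem (sub_mem (sub_mem (add_mem (add_mem (hquadratic 0 3) (hquadratic 1 4))
    (hcubic 1 2 3)) (hquartic 0 1 2 3)) (hquartic 0 1 3 4)) (hquartic 1 2 3 4)

theorem totalDegree_bridgePolynomial_le : (bridgePolynomial R).totalDegree ≤ 5 := by
  rw [← sub_add_cancel (bridgePolynomial R) (∏ i, X i)]
  exact (totalDegree_add _ _).trans <|
    max_le ((totalDegree_bridgePolynomial_sub_prod_X_le R).trans (by norm_num))
      (isHomogeneous_prod_X Finset.univ).totalDegree_le

theorem homogeneousComponent_five_bridgePolynomial :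
    homogeneousComponent 5 (bridgePolynomial R) = ∏ i, X i := by
  have hlower : homogeneousComponent 5 (bridgePolynomial R - ∏ i, X i) = 0 :=
    homogeneousComponent_eq_zero _ _
      (Nat.lt_succ_of_le (totalDegree_bridgePolynomial_sub_prod_X_le R))
  have htop : homogeneousComponent 5 (∏ i, X i : MvPolynomial (Fin 5) R) = ∏ i, X i :=
    homogeneousComponent_eq_self (isHomogeneous_prod_X Finset.univ)
  rwa [map_sub, htop, sub_eq_zero] at hlower

theorem eval_bridgePolynomial (x : Fin 5 → ℝ) :
    eval x (bridgePolynomial ℝ) = RMc (x 0) (x 1) (x 2) (x 3) (x 4) := by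
  simp [bridgePolynomial, RMc]

end Bridge

theorem rmc_line_necessary_conditions_general {R : Type*} [CommRing R] [IsDomain R] [Infinite R]
    {a b : Fin 5 → R} {c d : R}
    (hline : ∀ t, MvPolynomial.eval (fun i => a i * t + b i) (bridgePolynomial R) = c * t + d) :
    d = MvPolynomial.eval b (bridgePolynomial R) ∧ ∏ i, a i = 0 := by
  refine ⟨by simpa using (hline 0).symm, ?_⟩
  have htop := eval_homogeneousComponent_eq_zero_of_line_in_graph (by norm_num)
    (totalDegree_bridgePolynomial_le R) hline
  simpa [homogeneousComponent_five_bridgePolynomial] using htop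

theorem rmc_line_necessary_conditions (a1 a2 a3 a4 a5 a6 b1 b2 b3 b4 b5 b6 : ℝ)
    (hline : ∀ t : ℝ,
      RMc (a1*t + b1) (a2*t + b2) (a3*t + b3) (a4*t + b4) (a5*t + b5) = a6*t + b6) :
    b6 = RMc b1 b2 b3 b4 b5 ∧ a1*a2*a3*a4*a5 = 0 := by
  simpa [eval_bridgePolynomial, Fin.prod_univ_five] using
    rmc_line_necessary_conditions_general (a := ![a1, a2, a3, a4, a5])
      (b := ![b1, b2, b3, b4, b5]) (by simpa [eval_bridgePolynomial] using hline)
end
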